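/- The expected number of (VarShift)-redexes in a uniformly random λυ-term of size n satisfies E(X_n)/n → 1/64, where a (VarShift)-redex is a subterm of the form m[↑] for a de Bruijn index m. -/

import Mathlib

open Finset Filter

mutual
inductive Tm : Type
  | idx : Nat → Tm
  | lam : Tm → Tm
  | app : Tm → Tm → Tm
  | clos : Tm → Subst → Tm
inductive Subst : Type
  | slash : Tm → Subst
  | lift : Subst → Subst
  | shift : Subst
end

mutual
/-- Natural size of a λυ-term: every constructor weighs 1; index n has size n+1. -/
def Tm.size : Tm → Nat
  | .idx n => n + 1
  | .lam a => Tm.size a + 1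
  | .app a b => Tm.size a + Tm.size b + 1
  | .clos a s => Tm.size a + Subst.size s + 1
/-- Natural size of an explicit substitution. -/
def Subst.size : Subst → Nat
  | .slash a => Tm.size a + 1
  | .lift s => Subst.size s + 1
  | .shift => 1
end

/-- Number of λυ-terms of size `n`. -/
noncomputable def tcount (n : ℕ) : ℕ := Nat.card {a : Tm // Tm.size a = n}

/-- Number of explicit substitutions of size `n`. -/
noncomputable def scount (n : ℕ) : ℕ := Nat.card {s : Subst // Subst.size s = n}

/-- Expected value of the statistic `f` on a uniformly random λυ-term of size `n`
(the statistic is assumed to be bounded by the size, so summing `k` up to `n` suffices). -/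
noncomputable def expectTm (f : Tm → ℕ) (n : ℕ) : ℝ :=
  (∑ k ∈ Finset.range (n + 1),
      (k : ℝ) * (Nat.card {a : Tm // Tm.size a = n ∧ f a = k} : ℝ)) / (tcount n : ℝ)

mutual
/-- Number of (varShift)-redexes occurring in a λυ-term. -/
def Tm.varShiftCount : Tm → ℕ
  | .idx _ => 0
  | .lam a => Tm.varShiftCount a
  | .app a b => Tm.varShiftCount a + Tm.varShiftCount b
  | .clos (.idx _) .shift => 1
  | .clos a s => Tm.varShiftCount a + Subst.varShiftCount s
/-- Number of (varShift)-redexes occurring in a substitution. -/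
def Subst.varShiftCount : Subst → ℕ
  | .slash a => Tm.varShiftCount a
  | .lift s => Subst.varShiftCount s
  | .shift => 0
end

/-!
Splitting terms and substitutions by their head constructor gives equations for their generating
functions `T` and `S`; eliminating `S` leaves the Catalan equation `F = 1 + X * F ^ 2` for
`F = 1 + T`. The number of redexes is additive over the children of a node, except for an extra
`1` at each `m[↑]`, and these nodes have generating function `X * (X / (1 - X)) * X`. Hence the
generating function `D` of the total number of redexes solves the linear equation
`D * (1 - 2 * X * F) = X ^ 3`. As `1 / (1 - 2 * X * F)` generates the central binomial
coefficients, the mean number of redexes in size `n + 3` is `n.centralBinom / catalan (n + 3)`.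
Central binomial coefficients grow by a factor tending to `4`, so the shift by three that comes
from `X ^ 3` gives the limit `(1 / 4) ^ 3`.
-/

open PowerSeries hiding mk

section PowerSeriesIdentities

variable {R : Type*}

theorem coeff_eq_catalan_of_eq_one_add_X_mul_sq [Semiring R] {F : R⟦X⟧} (hF : F = 1 + X * F ^ 2)
    (n : ℕ) : coeff n F = catalan n := by
  induction n using Nat.strong_induction_on with
  | _ n ih =>
    rw [hF, map_add, coeff_one]
    cases n with
    | zero => simp
    | succ n =>
      rw [if_neg n.succ_ne_zero, zero_add, coeff_succ_X_mul, sq, coeff_mul, catalan_succ',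
        Nat.cast_sum]
      refine sum_congr rfl fun p hp => ?_
      have hp : p.1 + p.2 = n := mem_antidiagonal.mp hp
      rw [ih p.1 (by omega), ih p.2 (by omega), Nat.cast_mul]

theorem mk_centralBinom_mul_one_sub_of_eq_one_add_X_mul_sq [CommRing R] {F : R⟦X⟧}
    (hF : F = 1 + X * F ^ 2) :
    (PowerSeries.mk fun n => (n.centralBinom : R)) * (1 - 2 * X * F) = 1 := by
  have hB : (PowerSeries.mk fun n => (n.centralBinom : R)) = d⁄dX R (X * F) := by
    ext n
    rw [coeff_mk, coeff_derivative, coeff_succ_X_mul,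
      coeff_eq_catalan_of_eq_one_add_X_mul_sq hF, ← succ_mul_catalan_eq_centralBinom]
    push_cast
    ring
  have hF' : d⁄dX R F = F ^ 2 + 2 * X * F * d⁄dX R F := by
    conv_lhs => rw [hF]
    simp only [map_add, Derivation.map_one_eq_zero, Derivation.leibniz, Derivation.leibniz_pow,
      derivative_X, smul_eq_mul, nsmul_eq_mul]
    push_cast
    ring
  rw [hB, Derivation.leibniz, derivative_X, smul_eq_mul, smul_eq_mul]
  linear_combination X * hF' + hF

end PowerSeriesIdentities

section SizeSeries

variable {α β R : Type*} [Semiring R]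

/-- The condition on a size function that makes its domain a combinatorial class: every size is
attained by only finitely many objects. -/
def IsCombinatorialSize (size : α → ℕ) : Prop :=
  ∀ n, {a | size a = n}.Finite

/-- The generating function `∑ a, w a * X ^ size a` of the objects `a : α`, each counted with
weight `w a`. Sums over infinitely many nonzero weights of one size have the junk value `0`, so
`size` should satisfy `IsCombinatorialSize`. -/
noncomputable def sizeSeries (size : α → ℕ) (w : α → R) : R⟦X⟧ :=
  PowerSeries.mk fun n => ∑ᶠ a ∈ {a | size a = n}, w a

theorem setOf_size_add_size_eq (s : α → ℕ) (t : β → ℕ) (n : ℕ) :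
    {p : α × β | s p.1 + t p.2 = n} =
      ⋃ ij ∈ (antidiagonal n : Set (ℕ × ℕ)), {a | s a = ij.1} ×ˢ {b | t b = ij.2} := by
  ext p
  simp

theorem IsCombinatorialSize.comp_injective {size : β → ℕ} (h : IsCombinatorialSize size)
    {f : α → β} (hf : Function.Injective f) : IsCombinatorialSize (size ∘ f) :=
  fun n => (h n).preimage hf.injOn

theorem IsCombinatorialSize.prod {s : α → ℕ} {t : β → ℕ} (hs : IsCombinatorialSize s)
    (ht : IsCombinatorialSize t) : IsCombinatorialSize fun p : α × β => s p.1 + t p.2 := by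
  intro n
  rw [setOf_size_add_size_eq]
  exact (antidiagonal n).finite_toSet.biUnion fun ij _ => (hs ij.1).prod (ht ij.2)

theorem coeff_sizeSeries {size : α → ℕ} (h : IsCombinatorialSize size) (w : α → R) (n : ℕ) :
    coeff n (sizeSeries size w) = ∑ a ∈ (h n).toFinset, w a := by
  rw [sizeSeries, coeff_mk, finsum_mem_eq_finite_toFinset_sum _ (h n)]

theorem coeff_sizeSeries_one {size : α → ℕ} (h : IsCombinatorialSize size) (n : ℕ) :
    coeff n (sizeSeries size (fun _ => (1 : R))) = Nat.card {a // size a = n} := by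
  have hcard : Nat.card {a // size a = n} = #(h n).toFinset := Nat.subtype_card _ (by simp)
  rw [coeff_sizeSeries h, hcard]
  simp

theorem sizeSeries_id_one : sizeSeries id (fun _ => (1 : R)) = PowerSeries.mk 1 := by
  ext n
  simp [sizeSeries]

theorem sizeSeries_of_unique [Unique α] (w : α → R) :
    sizeSeries (fun _ => 0) w = C (w default) := by
  ext n
  rw [coeff_sizeSeries (fun _ => Set.toFinite _), coeff_C]
  split_ifs with hn
  · subst hn
    simp
  · simp [hn, eq_comm]

theorem sizeSeries_weight_zero (size : α → ℕ) : sizeSeries size (fun _ => (0 : R)) = 0 := by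
  ext n
  simp [sizeSeries]

theorem sizeSeries_size_succ (size : α → ℕ) (w : α → R) :
    sizeSeries (fun a => size a + 1) w = X * sizeSeries size w := by
  ext n
  cases n with
  | zero => simp [sizeSeries]
  | succ n => simp [sizeSeries, coeff_succ_X_mul]

theorem sizeSeries_weight_add {size : α → ℕ} (h : IsCombinatorialSize size) (v w : α → R) :
    sizeSeries size (fun a => v a + w a) = sizeSeries size v + sizeSeries size w := by
  ext n
  simp only [map_add, coeff_sizeSeries h, sum_add_distrib]

theorem sizeSeries_comp_equiv (e : α ≃ β) (size : β → ℕ) (w : β → R) :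
    sizeSeries (size ∘ e) (w ∘ e) = sizeSeries size w := by
  ext n
  simp only [sizeSeries, coeff_mk]
  exact finsum_mem_eq_of_bijOn e (e.bijOn fun _ => Iff.rfl) fun _ _ => rfl

theorem sizeSeries_sum {size : α ⊕ β → ℕ} (h : IsCombinatorialSize size) (w : α ⊕ β → R) :
    sizeSeries size w =
      sizeSeries (size ∘ Sum.inl) (w ∘ Sum.inl) + sizeSeries (size ∘ Sum.inr) (w ∘ Sum.inr) := by
  ext n
  rw [map_add, coeff_sizeSeries h, coeff_sizeSeries (h.comp_injective Sum.inl_injective),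
    coeff_sizeSeries (h.comp_injective Sum.inr_injective)]
  have hsplit : (h n).toFinset =
      (h.comp_injective Sum.inl_injective n).toFinset.disjSum
        (h.comp_injective Sum.inr_injective n).toFinset := by
    ext (a | b) <;> simp
  rw [hsplit, sum_disjSum]
  rfl

theorem sizeSeries_prod {s : α → ℕ} {t : β → ℕ} (hs : IsCombinatorialSize s)
    (ht : IsCombinatorialSize t) (v : α → R) (w : β → R) :
    sizeSeries (fun p : α × β => s p.1 + t p.2) (fun p => v p.1 * w p.2) =
      sizeSeries s v * sizeSeries t w := by
  classical
  ext n
  rw [coeff_mul, coeff_sizeSeries (hs.prod ht),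
    ← sum_fiberwise_of_maps_to (g := fun p : α × β => (s p.1, t p.2)) (t := antidiagonal n)
      (by simp)]
  refine sum_congr rfl fun ij hij => ?_
  have hfiber : {p ∈ (hs.prod ht n).toFinset | (s p.1, t p.2) = ij} =
      (hs ij.1).toFinset ×ˢ (ht ij.2).toFinset := by
    ext p
    have := mem_antidiagonal.mp hij
    simp only [mem_filter, Set.Finite.mem_toFinset, Set.mem_ofPred_eq, mem_product, Prod.ext_iff]
    omega
  rw [hfiber, sum_product, coeff_sizeSeries hs, coeff_sizeSeries ht, sum_mul_sum]

theorem sizeSeries_prod_add {s : α → ℕ} {t : β → ℕ} (hs : IsCombinatorialSize s)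
    (ht : IsCombinatorialSize t) (v : α → R) (w : β → R) :
    sizeSeries (fun p : α × β => s p.1 + t p.2) (fun p => v p.1 + w p.2) =
      sizeSeries s v * sizeSeries t (fun _ => 1) + sizeSeries s (fun _ => 1) * sizeSeries t w := by
  simp only [← sizeSeries_prod hs ht, mul_one, one_mul, ← sizeSeries_weight_add (hs.prod ht)]

end SizeSeries

section Decomposition

theorem Tm.size_ne_zero (a : Tm) : a.size ≠ 0 := by
  cases a <;> simp [Tm.size]

theorem Subst.size_ne_zero (s : Subst) : s.size ≠ 0 := by
  cases s <;> simp [Subst.size]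

theorem finite_size_le (n : ℕ) :
    {a : Tm | a.size ≤ n}.Finite ∧ {s : Subst | s.size ≤ n}.Finite := by
  induction n with
  | zero => simp [Tm.size_ne_zero, Subst.size_ne_zero]
  | succ n ih =>
    obtain ⟨hTm, hSubst⟩ := ih
    constructor
    · refine ((((Set.finite_Iic n).image Tm.idx).union (hTm.image Tm.lam)).union
        ((hTm.image2 Tm.app hTm).union (hTm.image2 Tm.clos hSubst))).subset fun a ha => ?_
      cases a <;> grind [Tm.size]
    · refine (((hTm.image Subst.slash).union (hSubst.image Subst.lift)).union
        (Set.finite_singleton Subst.shift)).subset fun s hs => ?_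
      cases s <;> grind [Subst.size]

theorem Tm.isCombinatorialSize : IsCombinatorialSize Tm.size :=
  fun n => (finite_size_le n).1.subset fun _ => le_of_eq

theorem Subst.isCombinatorialSize : IsCombinatorialSize Subst.size :=
  fun n => (finite_size_le n).2.subset fun _ => le_of_eq

/-- The decomposition of λυ-terms by their head constructor. -/
def Tm.equivSum : ℕ ⊕ Tm ⊕ Tm × Tm ⊕ Tm × Subst ≃ Tm where
  toFun
    | .inl n => .idx n
    | .inr (.inl a) => .lam a
    | .inr (.inr (.inl (a, b))) => .app a b
    | .inr (.inr (.inr (a, s))) => .clos a s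
  invFun
    | .idx n => .inl n
    | .lam a => .inr (.inl a)
    | .app a b => .inr (.inr (.inl (a, b)))
    | .clos a s => .inr (.inr (.inr (a, s)))
  left_inv := by rintro (n | a | ⟨a, b⟩ | ⟨a, s⟩) <;> rfl
  right_inv := by rintro (n | a | ⟨a, b⟩ | ⟨a, s⟩) <;> rfl

/-- The decomposition of explicit substitutions by their head constructor. -/
def Subst.equivSum : Tm ⊕ Subst ⊕ Unit ≃ Subst where
  toFun
    | .inl a => .slash a
    | .inr (.inl s) => .lift s
    | .inr (.inr ()) => .shift
  invFun
    | .slash a => .inl a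
    | .lift s => .inr (.inl s)
    | .shift => .inr (.inr ())
  left_inv := by rintro (a | s | ⟨⟩) <;> rfl
  right_inv := by rintro (a | s | ⟨⟩) <;> rfl

variable {R : Type*} [Semiring R]

theorem Tm.sizeSeries_eq (w : Tm → R) :
    sizeSeries Tm.size w = X * (sizeSeries id (fun n => w (.idx n)) +
      sizeSeries Tm.size (fun a => w (.lam a)) +
      sizeSeries (fun p : Tm × Tm => p.1.size + p.2.size) (fun p => w (.app p.1 p.2)) +
      sizeSeries (fun p : Tm × Subst => p.1.size + p.2.size) (fun p => w (.clos p.1 p.2))) := by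
  have h := Tm.isCombinatorialSize.comp_injective Tm.equivSum.injective
  have h' := h.comp_injective Sum.inr_injective
  rw [← sizeSeries_comp_equiv Tm.equivSum, sizeSeries_sum h, sizeSeries_sum h',
    sizeSeries_sum (h'.comp_injective Sum.inr_injective)]
  simp only [mul_add, ← sizeSeries_size_succ, ← add_assoc]
  rfl

theorem Subst.sizeSeries_eq (w : Subst → R) :
    sizeSeries Subst.size w = X * (sizeSeries Tm.size (fun a => w (.slash a)) +
      sizeSeries Subst.size (fun s => w (.lift s)) + C (w .shift)) := by
  have h := Subst.isCombinatorialSize.comp_injective Subst.equivSum.injective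
  rw [← sizeSeries_comp_equiv Subst.equivSum, sizeSeries_sum h,
    sizeSeries_sum (h.comp_injective Sum.inr_injective),
    ← sizeSeries_of_unique fun _ : Unit => w .shift]
  simp only [mul_add, ← sizeSeries_size_succ, ← add_assoc]
  rfl

end Decomposition

section GeneratingFunctions

theorem Tm.cast_varShiftCount_clos {R : Type*} [Semiring R] (a : Tm) (s : Subst) :
    ((Tm.clos a s).varShiftCount : R) = a.varShiftCount + s.varShiftCount +
      (Set.range Tm.idx).indicator 1 a * ({.shift} : Set Subst).indicator 1 s := by
  cases a <;> cases s <;> simp [Tm.varShiftCount, Subst.varShiftCount]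

variable (R : Type*)

/-- The generating function of λυ-terms by size. -/
noncomputable def Tm.genFun [Semiring R] : R⟦X⟧ := sizeSeries Tm.size fun _ => 1

/-- The generating function of explicit substitutions by size. -/
noncomputable def Subst.genFun [Semiring R] : R⟦X⟧ := sizeSeries Subst.size fun _ => 1

/-- The generating function by size of the total number of (VarShift)-redexes in λυ-terms. -/
noncomputable def Tm.redexGenFun [Semiring R] : R⟦X⟧ :=
  sizeSeries Tm.size fun a => (a.varShiftCount : R)

/-- The generating function by size of the total number of (VarShift)-redexes in explicit
substitutions. -/
noncomputable def Subst.redexGenFun [Semiring R] : R⟦X⟧ :=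
  sizeSeries Subst.size fun s => (s.varShiftCount : R)

section Semiring

variable [Semiring R]

theorem Tm.sizeSeries_indicator_range_idx :
    sizeSeries Tm.size ((Set.range Tm.idx).indicator (1 : Tm → R)) = X * PowerSeries.mk 1 := by
  rw [Tm.sizeSeries_eq, ← sizeSeries_id_one]
  simp [sizeSeries_weight_zero]

theorem Subst.sizeSeries_indicator_shift :
    sizeSeries Subst.size (({.shift} : Set Subst).indicator (1 : Subst → R)) = X := by
  rw [Subst.sizeSeries_eq]
  simp [sizeSeries_weight_zero]

theorem Tm.genFun_eq : Tm.genFun R = X * (PowerSeries.mk 1 + Tm.genFun R +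
    Tm.genFun R * Tm.genFun R + Tm.genFun R * Subst.genFun R) := by
  have hTm := Tm.isCombinatorialSize
  conv_lhs => rw [Tm.genFun, Tm.sizeSeries_eq]
  simp only [Tm.genFun, Subst.genFun, sizeSeries_id_one, ← sizeSeries_prod hTm hTm,
    ← sizeSeries_prod hTm Subst.isCombinatorialSize, mul_one]

theorem Subst.genFun_eq : Subst.genFun R = X * (Tm.genFun R + Subst.genFun R + 1) := by
  conv_lhs => rw [Subst.genFun, Subst.sizeSeries_eq, map_one]
  rfl

theorem Tm.redexGenFun_eq : Tm.redexGenFun R = X * (Tm.redexGenFun R +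
    (Tm.redexGenFun R * Tm.genFun R + Tm.genFun R * Tm.redexGenFun R) +
    (Tm.redexGenFun R * Subst.genFun R + Tm.genFun R * Subst.redexGenFun R +
      X * PowerSeries.mk 1 * X)) := by
  have hTm := Tm.isCombinatorialSize
  have hSubst := Subst.isCombinatorialSize
  have happ : sizeSeries (fun p : Tm × Tm => p.1.size + p.2.size)
      (fun p => ((Tm.app p.1 p.2).varShiftCount : R)) =
      Tm.redexGenFun R * Tm.genFun R + Tm.genFun R * Tm.redexGenFun R := by
    simp only [Tm.varShiftCount, Nat.cast_add]
    exact sizeSeries_prod_add hTm hTm (fun a => (a.varShiftCount : R)) fun b => b.varShiftCount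
  have hclos : sizeSeries (fun p : Tm × Subst => p.1.size + p.2.size)
      (fun p => ((Tm.clos p.1 p.2).varShiftCount : R)) =
      Tm.redexGenFun R * Subst.genFun R + Tm.genFun R * Subst.redexGenFun R +
        X * PowerSeries.mk 1 * X := by
    simp only [Tm.cast_varShiftCount_clos]
    rw [sizeSeries_weight_add (hTm.prod hSubst), sizeSeries_prod hTm hSubst,
      Tm.sizeSeries_indicator_range_idx, Subst.sizeSeries_indicator_shift]
    congr 1
    exact sizeSeries_prod_add hTm hSubst (fun a => (a.varShiftCount : R)) fun s => s.varShiftCount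
  conv_lhs => rw [Tm.redexGenFun, Tm.sizeSeries_eq, happ, hclos]
  simp only [Tm.varShiftCount, Nat.cast_zero, sizeSeries_weight_zero, zero_add]
  rfl

theorem Subst.redexGenFun_eq :
    Subst.redexGenFun R = X * (Tm.redexGenFun R + Subst.redexGenFun R) := by
  conv_lhs => rw [Subst.redexGenFun, Subst.sizeSeries_eq]
  simp only [Subst.varShiftCount, Nat.cast_zero, map_zero, add_zero]
  rfl

end Semiring

variable [CommRing R]

-- The factor `1 - X` clears both the geometric series and the term `X * S` in the equation of `S`.
theorem Tm.one_add_genFun_eq : 1 + Tm.genFun R = 1 + X * (1 + Tm.genFun R) ^ 2 := by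
  linear_combination (1 - X) * Tm.genFun_eq R + X * Tm.genFun R * Subst.genFun_eq R +
    X * mk_one_mul_one_sub_eq_one R

theorem Tm.redexGenFun_mul_one_sub :
    Tm.redexGenFun R * (1 - 2 * X * (1 + Tm.genFun R)) = X ^ 3 := by
  linear_combination (1 - X) * Tm.redexGenFun_eq R + X * Tm.genFun R * Subst.redexGenFun_eq R +
    X * Tm.redexGenFun R * Subst.genFun_eq R + X ^ 3 * mk_one_mul_one_sub_eq_one R

theorem Tm.redexGenFun_eq_X_pow_mul :
    Tm.redexGenFun R = X ^ 3 * PowerSeries.mk fun n => (n.centralBinom : R) := by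
  have hB := mk_centralBinom_mul_one_sub_of_eq_one_add_X_mul_sq (Tm.one_add_genFun_eq R)
  linear_combination (PowerSeries.mk fun n => (n.centralBinom : R)) * Tm.redexGenFun_mul_one_sub R -
    Tm.redexGenFun R * hB

end GeneratingFunctions

section Expectation

mutual

theorem Tm.varShiftCount_le_size : ∀ a : Tm, a.varShiftCount ≤ a.size
  | .idx _ => by simp [Tm.varShiftCount]
  | .lam a => by
    have := a.varShiftCount_le_size
    simp only [Tm.varShiftCount, Tm.size]; omega
  | .app a b => by
    have := a.varShiftCount_le_size
    have := b.varShiftCount_le_size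
    simp only [Tm.varShiftCount, Tm.size]; omega
  | .clos a s => by
    have := a.varShiftCount_le_size
    have := s.varShiftCount_le_size
    have : (Tm.clos a s).varShiftCount ≤ a.varShiftCount + s.varShiftCount + 1 := by
      cases a <;> cases s <;> simp [Tm.varShiftCount, Subst.varShiftCount]
    simp only [Tm.size]; omega

theorem Subst.varShiftCount_le_size : ∀ s : Subst, s.varShiftCount ≤ s.size
  | .slash a => by
    have := a.varShiftCount_le_size
    simp only [Subst.varShiftCount, Subst.size]; omega
  | .lift s => by
    have := s.varShiftCount_le_size
    simp only [Subst.varShiftCount, Subst.size]; omega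
  | .shift => by simp [Subst.varShiftCount]

end

theorem tcount_eq_catalan {n : ℕ} (hn : n ≠ 0) : tcount n = catalan n := by
  have h := coeff_eq_catalan_of_eq_one_add_X_mul_sq (Tm.one_add_genFun_eq ℤ) n
  rw [map_add, coeff_one, if_neg hn, zero_add, Tm.genFun,
    coeff_sizeSeries_one Tm.isCombinatorialSize] at h
  exact_mod_cast h

theorem expectTm_eq_coeff_div {f : Tm → ℕ} {n : ℕ} (hf : ∀ a : Tm, a.size = n → f a ≤ n) :
    expectTm f n = coeff n (sizeSeries Tm.size fun a => (f a : ℝ)) / tcount n := by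
  have h := Tm.isCombinatorialSize
  rw [expectTm, coeff_sizeSeries h,
    ← sum_fiberwise_of_maps_to (g := f) (t := range (n + 1)) (by simpa [Nat.lt_succ_iff] using hf)]
  congr 1
  refine sum_congr rfl fun k _ => ?_
  have hcard : Nat.card {a : Tm // a.size = n ∧ f a = k} = #{a ∈ (h n).toFinset | f a = k} :=
    Nat.subtype_card _ (by simp)
  have hconst : ∀ a ∈ {a ∈ (h n).toFinset | f a = k}, (f a : ℝ) = k := by simp
  rw [hcard, sum_congr rfl hconst, sum_const, nsmul_eq_mul, mul_comm]

theorem expectTm_varShiftCount_add_three (n : ℕ) :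
    expectTm Tm.varShiftCount (n + 3) = n.centralBinom / catalan (n + 3) := by
  rw [expectTm_eq_coeff_div fun a ha => a.varShiftCount_le_size.trans_eq ha,
    tcount_eq_catalan (by omega), ← Tm.redexGenFun, Tm.redexGenFun_eq_X_pow_mul, coeff_X_pow_mul,
    coeff_mk]

theorem expectTm_varShiftCount_add_three_div (n : ℕ) :
    expectTm Tm.varShiftCount (n + 3) / (n + 3 : ℕ) =
      n.centralBinom / (n + 3).centralBinom * ((n + 4) / (n + 3)) := by
  rw [expectTm_varShiftCount_add_three, ← succ_mul_catalan_eq_centralBinom (n + 3)]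
  push_cast
  field_simp
  ring

end Expectation

section Asymptotics

theorem tendsto_centralBinom_div_succ :
    Tendsto (fun n : ℕ => (n.centralBinom : ℝ) / (n + 1).centralBinom) atTop (nhds (1 / 4)) := by
  refine (tendsto_add_mul_div_add_mul_atTop_nhds (1 : ℝ) 2 1 four_ne_zero).congr fun n => ?_
  have h : ((n : ℝ) + 1) * (n + 1).centralBinom = 2 * (2 * n + 1) * n.centralBinom :=
    mod_cast Nat.succ_mul_centralBinom_succ n
  have : ((n + 1).centralBinom : ℝ) ≠ 0 := mod_cast (n + 1).centralBinom_ne_zero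
  rw [div_eq_div_iff (by positivity) this]
  linear_combination h

theorem tendsto_centralBinom_div_add (k : ℕ) :
    Tendsto (fun n : ℕ => (n.centralBinom : ℝ) / (n + k).centralBinom) atTop
      (nhds ((1 / 4) ^ k)) := by
  induction k with
  | zero => simp [Nat.centralBinom_ne_zero]
  | succ k ih =>
    rw [pow_succ]
    refine (ih.mul (tendsto_centralBinom_div_succ.comp (tendsto_add_atTop_nat k))).congr fun n => ?_
    have : ((n + k).centralBinom : ℝ) ≠ 0 := mod_cast (n + k).centralBinom_ne_zero
    exact div_mul_div_cancel₀ this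

end Asymptotics

/-- the expected number of (VarShift)-redexes (subterms m[↑] for an index m)
per size n tends to 1/64. -/
theorem stmt17 :
    Tendsto (fun n : ℕ => expectTm Tm.varShiftCount n / (n : ℝ)) atTop (nhds (1 / 64)) := by
  have hshift : Tendsto (fun n : ℕ => ((n : ℝ) + 4) / (n + 3)) atTop (nhds 1) := by
    simpa [add_comm] using tendsto_add_mul_div_add_mul_atTop_nhds (4 : ℝ) 3 1 one_ne_zero
  have hlim : (1 / 64 : ℝ) = (1 / 4) ^ 3 * 1 := by norm_num
  rw [← tendsto_add_atTop_iff_nat 3, hlim]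
  simp only [expectTm_varShiftCount_add_three_div]
  exact (tendsto_centralBinom_div_add 3).mul hshift
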